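/- arXiv:0710.5184 — 4 statements merged into one kernel-verified Lean document; each statement's English description precedes it below -/
import Mathlib

section
/- Wronskian quotient derivative identity (equation (Idd1)). Let m ≥ 0 and let f_0, …, f_{m+1} be smooth real functions on an open interval I. Denote by W the Wronskian Wr[f_0, …, f_{m+1}], by W_i the Wronskian of the list with f_i omitted, by W_{m+1} the Wronskian of the list with f_{m+1} omitted, and by W_{i,m+1} the Wronskian of the list with both f_i and f_{m+1} omitted. Then for each 0 ≤ i ≤ m and each φ ∈ I with W_{m+1}(φ) ≠ 0, one has (d/dφ)(W_i/W_{m+1})(φ) = W(φ)·W_{i,m+1}(φ)/W_{m+1}(φ)². -/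
/-- The Wronskian of a family of `n` real functions: the determinant of the
`n × n` matrix whose `(i, j)`-entry is the `j`-th derivative of the `i`-th function.
(The Wronskian of the empty family is `1`.) -/
noncomputable def wronsk {n : ℕ} (f : Fin n → ℝ → ℝ) (t : ℝ) : ℝ :=
  (Matrix.of fun i j : Fin n => iteratedDeriv (j : ℕ) (f i) t).det

open Matrix in
/-- The determinant as a linear function of its last row, with columns selected by `c`. -/
noncomputable def lastRowDet {k N : ℕ} (c : Fin (k + 1) → Fin N) (R : Fin k → Fin N → ℝ) :
    (Fin N → ℝ) →ₗ[ℝ] ℝ :=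
  ((detRowAlternating (n := Fin (k + 1)) (R := ℝ)).toMultilinearMap.toLinearMap
    (fun r j => (Fin.snoc R 0 : Fin (k + 1) → Fin N → ℝ) r (c j)) (Fin.last k)) ∘ₗ
    LinearMap.funLeft ℝ ℝ c

theorem lastRowDet_apply {k N : ℕ} (c : Fin (k + 1) → Fin N) (R : Fin k → Fin N → ℝ)
    (v : Fin N → ℝ) : lastRowDet c R v =
      (Matrix.of fun r j => (Fin.snoc R v : Fin (k + 1) → Fin N → ℝ) r (c j)).det := by
  unfold lastRowDet
  simp only [LinearMap.comp_apply, MultilinearMap.toLinearMap_apply]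
  change Matrix.det _ = _
  congr 1
  ext r j
  refine Fin.lastCases ?_ (fun r => ?_) r
  · simp [LinearMap.funLeft]
  · simp

theorem lastRowDet_row {k N : ℕ} (c : Fin (k + 1) → Fin N) (R : Fin k → Fin N → ℝ)
    (r : Fin k) : lastRowDet c R (R r) = 0 := by
  rw [lastRowDet_apply]
  apply Matrix.det_zero_of_row_eq (Fin.castSucc_lt_last r).ne
  ext j
  simp

theorem lastRowDet_single {k N : ℕ} (c : Fin (k + 1) → Fin (N + 1))
    (R : Fin k → Fin (N + 1) → ℝ) (hc : ∀ j : Fin k, c j.castSucc ≠ Fin.last N)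
    (hl : c (Fin.last k) = Fin.last N) :
    lastRowDet c R (Pi.single (Fin.last N) 1) = (Matrix.of fun r j => R r (c j.castSucc)).det := by
  rw [lastRowDet_apply, Matrix.det_succ_row _ (Fin.last k), Fin.sum_univ_castSucc]
  simp only [Matrix.of_apply, Fin.snoc_last, Pi.single_eq_of_ne (hc _), hl, Pi.single_eq_same,
    mul_zero, zero_mul, Finset.sum_const_zero, zero_add, mul_one, Fin.succAbove_last]
  rw [Even.neg_one_pow ⟨_, rfl⟩, one_mul]
  congr 1
  ext r j
  simp

theorem lastRowDet_single_zero {k N : ℕ} (c : Fin (k + 1) → Fin (N + 1))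
    (R : Fin k → Fin (N + 1) → ℝ) (hc : ∀ j : Fin (k + 1), c j ≠ Fin.last N) :
    lastRowDet c R (Pi.single (Fin.last N) 1) = 0 := by
  rw [lastRowDet_apply]
  apply Matrix.det_eq_zero_of_row_eq_zero (Fin.last k)
  intro j
  simp [hc j]

theorem lastRowDet_perm {m N : ℕ} (c : Fin (m + 1) → Fin N) (R : Fin (m + 1) → Fin N → ℝ)
    (i : Fin (m + 1)) : lastRowDet c (fun j => R (i.succAbove j)) (R i) =
      (Equiv.Perm.sign (finSuccEquivLast.trans (finSuccEquiv' i).symm) : ℤ) *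
        (Matrix.of fun r j => R r (c j)).det := by
  rw [lastRowDet_apply, ← Matrix.det_permute]
  congr 1
  ext r j
  refine Fin.lastCases ?_ (fun r => ?_) r <;> simp

theorem dodgson_aux (m : ℕ) (R : Fin (m + 1) → Fin (m + 2) → ℝ) (v : Fin (m + 2) → ℝ)
    (i : Fin (m + 1))
    (hM : (Matrix.of fun (r : Fin (m + 1)) (j : Fin (m + 1)) => R r j.castSucc).det ≠ 0) :
    lastRowDet (Fin.last m).castSucc.succAbove (fun j => R (i.succAbove j)) v *
        (Matrix.of fun (r : Fin (m + 1)) (j : Fin (m + 1)) => R r j.castSucc).det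
      - lastRowDet Fin.castSucc (fun j => R (i.succAbove j)) v *
        (Matrix.of fun (r : Fin (m + 1)) (j : Fin (m + 1)) =>
          R r ((Fin.last m).castSucc.succAbove j)).det
      = lastRowDet id R v *
        (Matrix.of fun (r : Fin m) (j : Fin m) => R (i.succAbove r) j.castSucc.castSucc).det := by
  set M := Matrix.of fun (r : Fin (m + 1)) (j : Fin (m + 1)) => R r j.castSucc with hMdef
  set M' := Matrix.of fun (r : Fin (m + 1)) (j : Fin (m + 1)) =>
          R r ((Fin.last m).castSucc.succAbove j)
  set Q := Matrix.of fun (r : Fin m) (j : Fin m) => R (i.succAbove r) j.castSucc.castSucc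
  let L : (Fin (m + 2) → ℝ) →ₗ[ℝ] ℝ :=
    M.det • lastRowDet (Fin.last m).castSucc.succAbove (fun j => R (i.succAbove j))
    - M'.det • lastRowDet Fin.castSucc (fun j => R (i.succAbove j)) - Q.det • lastRowDet id R
  have hrow : ∀ r, L (R r) = 0 := by
    intro r
    simp only [L, LinearMap.sub_apply, LinearMap.smul_apply, smul_eq_mul, lastRowDet_row]
    by_cases h : r = i
    · subst h
      rw [lastRowDet_perm, lastRowDet_perm]
      ring
    · obtain ⟨s, rfl⟩ := Fin.exists_succAbove_eq h
      have h1 := fun c => lastRowDet_row (N := m + 2) c (fun j => R (i.succAbove j)) s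
      rw [h1, h1]
      ring
  have hcs : ∀ j : Fin m, (Fin.last m).castSucc.succAbove j.castSucc = j.castSucc.castSucc := by
    intro j
    rw [Fin.succAbove_of_castSucc_lt]
    simp [Fin.lt_def]
  have hcl : (Fin.last m).castSucc.succAbove (Fin.last m) = Fin.last (m + 1) := by
    rw [Fin.succAbove_of_le_castSucc]
    · simp
    · simp
  have hlast : L (Pi.single (Fin.last (m + 1)) 1) = 0 := by
    simp only [L, LinearMap.sub_apply, LinearMap.smul_apply, smul_eq_mul]
    rw [lastRowDet_single _ _ (fun j => by rw [hcs]; exact (Fin.castSucc_lt_last _).ne) hcl,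
      lastRowDet_single_zero _ _ (fun j => (Fin.castSucc_lt_last _).ne),
      lastRowDet_single id R (fun j => (Fin.castSucc_lt_last _).ne) rfl]
    simp only [hcs, id, Q, M]
    ring
  have hv : L v = 0 := by
    have hu : IsUnit M.det := isUnit_iff_ne_zero.mpr hM
    set l := Matrix.vecMul (fun j : Fin (m + 1) => v j.castSucc) M⁻¹ with hl
    have hlM : Matrix.vecMul l M = fun j : Fin (m + 1) => v j.castSucc := by
      rw [hl, Matrix.vecMul_vecMul, Matrix.nonsing_inv_mul _ hu, Matrix.vecMul_one]
    have hdec : v = ∑ r, l r • R r +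
        (v (Fin.last (m + 1)) - ∑ r, l r * R r (Fin.last (m + 1))) •
          (Pi.single (Fin.last (m + 1)) 1 : Fin (m + 2) → ℝ) := by
      ext j
      refine Fin.lastCases ?_ (fun j => ?_) j
      · simp
      · have := congrFun hlM j
        simp only [Matrix.vecMul, dotProduct, M, Matrix.of_apply] at this
        simp [(Fin.castSucc_lt_last j).ne, this]
    rw [hdec, map_add, map_sum, map_smul, hlast]
    simp [hrow]
  simp only [L, LinearMap.sub_apply, LinearMap.smul_apply, smul_eq_mul] at hv
  linarith

theorem hasDerivAt_det {n : ℕ} (A : ℝ → Matrix (Fin n) (Fin n) ℝ) (A' : Matrix (Fin n) (Fin n) ℝ)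
    (t : ℝ) (h : ∀ i j, HasDerivAt (fun s => A s i j) (A' i j) t) :
    HasDerivAt (fun s => (A s).det) (∑ k, ((A t).updateCol k (fun i => A' i k)).det) t := by
  simp only [Matrix.det_apply']
  rw [Finset.sum_comm]
  apply HasDerivAt.fun_sum
  intro σ _
  rw [← Finset.mul_sum]
  apply HasDerivAt.const_mul
  have := HasDerivAt.fun_finsetProd (u := Finset.univ) (fun i _ => h (σ i) i)
  convert this using 1
  refine Finset.sum_congr rfl fun k _ => ?_
  rw [← Finset.mul_prod_erase _ _ (Finset.mem_univ k), mul_comm, smul_eq_mul]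
  congr 1
  · refine Finset.prod_congr rfl fun j hj => ?_
    rw [Matrix.updateCol_ne (Finset.ne_of_mem_erase hj)]
  · simp

theorem hasDerivAt_wronsk {n : ℕ} (g : Fin (n + 1) → ℝ → ℝ) (t : ℝ)
    (h : ∀ i (k : ℕ), HasDerivAt (iteratedDeriv k (g i)) (iteratedDeriv (k + 1) (g i) t) t) :
    HasDerivAt (wronsk g) (Matrix.of fun i j : Fin (n + 1) =>
      iteratedDeriv ((Fin.last n).castSucc.succAbove j : ℕ) (g i) t).det t := by
  have := hasDerivAt_det (fun s => Matrix.of fun i j : Fin (n + 1) => iteratedDeriv (j : ℕ) (g i) s)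
    (Matrix.of fun i j : Fin (n + 1) => iteratedDeriv ((j : ℕ) + 1) (g i) t) t (fun i j => h i j)
  change HasDerivAt (fun s => wronsk g s) _ t
  unfold wronsk
  convert this using 1
  rw [Fin.sum_univ_castSucc, Finset.sum_eq_zero, zero_add]
  · congr 1
    ext i j
    refine Fin.lastCases ?_ (fun j => ?_) j
    · rw [Matrix.of_apply, Fin.succAbove_of_le_castSucc _ _ le_rfl]
      simp
    · rw [Matrix.of_apply, Fin.succAbove_of_castSucc_lt (Fin.last n).castSucc j.castSucc
          (by simp [Fin.lt_def]),
        Matrix.updateCol_ne (Fin.castSucc_lt_last j).ne]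
      simp
  · intro k _
    apply Matrix.det_zero_of_column_eq (i := k.castSucc) (j := k.succ)
    · exact (Fin.castSucc_lt_succ).ne
    · intro r
      rw [Matrix.updateCol_self, Matrix.updateCol_ne (Fin.castSucc_lt_succ).ne']
      simp

/-- **Equation (Idd1): Wronskian quotient derivative identity.** For smooth functions
`f_0, …, f_{m+1}` on an open interval, `(W_i/W_{m+1})' = W · W_{i,m+1} / W_{m+1}²`
wherever `W_{m+1} ≠ 0`, where `W` is the full Wronskian, `W_i` omits `f_i`,
`W_{m+1}` omits `f_{m+1}`, and `W_{i,m+1}` omits both. -/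
theorem wronskian_quotient_deriv (m : ℕ) (a b : ℝ) (f : Fin (m + 2) → ℝ → ℝ)
    (hf : ∀ i, ContDiffOn ℝ (⊤ : ℕ∞) (f i) (Set.Ioo a b))
    (i : Fin (m + 1)) (φ : ℝ) (hφ : φ ∈ Set.Ioo a b)
    (hW : wronsk (fun j : Fin (m + 1) => f j.castSucc) φ ≠ 0) :
    deriv (fun t => wronsk (fun j : Fin (m + 1) => f (i.castSucc.succAbove j)) t /
        wronsk (fun j : Fin (m + 1) => f j.castSucc) t) φ
      = wronsk f φ * wronsk (fun j : Fin m => f (i.succAbove j).castSucc) φ /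
          (wronsk (fun j : Fin (m + 1) => f j.castSucc) φ) ^ 2 := by

  have hd : ∀ i (k : ℕ), HasDerivAt (iteratedDeriv k (f i)) (iteratedDeriv (k + 1) (f i) φ) φ := by
    intro i k
    rw [iteratedDeriv_succ]
    apply DifferentiableAt.hasDerivAt
    have h1 := ((hf i).differentiableOn_iteratedDerivWithin (m := k)
      (by exact_mod_cast WithTop.coe_lt_top k) isOpen_Ioo.uniqueDiffOn).differentiableAt
      (isOpen_Ioo.mem_nhds hφ)
    refine h1.congr_of_eventuallyEq ?_
    filter_upwards [isOpen_Ioo.mem_nhds hφ] with x hx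
    exact (iteratedDerivWithin_of_isOpen isOpen_Ioo hx).symm
  have hn := hasDerivAt_wronsk (fun j : Fin (m + 1) => f (i.castSucc.succAbove j)) φ
    (fun j k => hd _ k)
  have hm := hasDerivAt_wronsk (fun j : Fin (m + 1) => f j.castSucc) φ (fun j k => hd _ k)
  refine (hn.div hm hW).deriv.trans ?_
  congr 1
  have key := dodgson_aux m (fun r j => iteratedDeriv (j : ℕ) (f r.castSucc) φ)
    (fun j => iteratedDeriv (j : ℕ) (f (Fin.last _)) φ) i hW
  have hs : ∀ c : Fin (m + 1) → Fin (m + 2),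
      lastRowDet c (fun (k : Fin m) (j : Fin (m + 2)) =>
        iteratedDeriv (j : ℕ) (f (i.succAbove k).castSucc) φ)
        (fun j => iteratedDeriv (j : ℕ) (f (Fin.last _)) φ) =
      (Matrix.of fun r j : Fin (m + 1) =>
        iteratedDeriv (c j : ℕ) (f (i.castSucc.succAbove r)) φ).det := by
    intro c
    rw [lastRowDet_apply]
    congr 1
    ext r j
    refine Fin.lastCases ?_ (fun r => ?_) r
    · have hlast : i.castSucc.succAbove (Fin.last m) = Fin.last (m + 1) := by
        rw [Fin.succAbove_of_le_castSucc _ _ (Fin.castSucc_le_castSucc_iff.mpr (Fin.le_last i)),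
          Fin.succ_last]
      simp only [Matrix.of_apply, Fin.snoc_last, hlast]
    · simp [Fin.castSucc_succAbove_castSucc]
  have hfull : lastRowDet id (fun r (j : Fin (m + 2)) => iteratedDeriv (j : ℕ) (f r.castSucc) φ)
      (fun j => iteratedDeriv (j : ℕ) (f (Fin.last _)) φ) = wronsk f φ := by
    rw [lastRowDet_apply]
    unfold wronsk
    congr 1
    ext r j
    refine Fin.lastCases ?_ (fun r => ?_) r <;> simp
  rw [hs, hs, hfull] at key
  exact key
end

section
/- Integration of the first-order PDE (equation (pde) to (F)). Let I ⊆ ℝ be an open interval, let g : I → ℝ be differentiable and nowhere zero, and let S : I × I → ℝ be a differentiable function satisfying −(∂S/∂φ(φ,ϕ) + ∂S/∂ϕ(φ,ϕ)) + (g'(φ)/g(φ) + g'(ϕ)/g(ϕ))·S(φ,ϕ) = g'(φ)/g(φ) + g'(ϕ)/g(ϕ) for all (φ, ϕ) ∈ I × I. Then there exists a function F of one real variable such that S(φ, ϕ) = 1 + F(φ − ϕ)·g(φ)·g(ϕ) for all (φ, ϕ) ∈ I × I. -/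
/-- First partial derivative in the first variable. -/
noncomputable def pdx (f : ℝ × ℝ → ℝ) (x : ℝ × ℝ) : ℝ := deriv (fun s => f (s, x.2)) x.1

/-- First partial derivative in the second variable. -/
noncomputable def pdy (f : ℝ × ℝ → ℝ) (x : ℝ × ℝ) : ℝ := deriv (fun s => f (x.1, s)) x.2

/-- **Integration of the first-order PDE (equation (pde) to (F)).** If `g` is
differentiable and nowhere zero on an open interval `I`, and `S` is differentiable on
`I × I` and satisfies `−(S_φ + S_ϕ) + (g'/g(φ) + g'/g(ϕ)) S = g'/g(φ) + g'/g(ϕ)`,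
then `S(φ, ϕ) = 1 + F(φ − ϕ) g(φ) g(ϕ)` for some function `F` of one variable. -/
theorem integrate_first_order_pde (a b : ℝ) (g : ℝ → ℝ)
    (hg : ∀ φ ∈ Set.Ioo a b, DifferentiableAt ℝ g φ)
    (hg0 : ∀ φ ∈ Set.Ioo a b, g φ ≠ 0)
    (S : ℝ × ℝ → ℝ)
    (hS : ∀ p ∈ Set.Ioo a b ×ˢ Set.Ioo a b, DifferentiableAt ℝ S p)
    (hpde : ∀ φ ∈ Set.Ioo a b, ∀ ϕ ∈ Set.Ioo a b,
      -(pdx S (φ, ϕ) + pdy S (φ, ϕ)) +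
          (deriv g φ / g φ + deriv g ϕ / g ϕ) * S (φ, ϕ)
        = deriv g φ / g φ + deriv g ϕ / g ϕ) :
    ∃ F : ℝ → ℝ, ∀ φ ∈ Set.Ioo a b, ∀ ϕ ∈ Set.Ioo a b,
      S (φ, ϕ) = 1 + F (φ - ϕ) * g φ * g ϕ := by
  have key : ∀ d t u : ℝ, t ∈ Set.Ioo a b → t + d ∈ Set.Ioo a b → u ∈ Set.Ioo a b →
      u + d ∈ Set.Ioo a b →
      (S (t + d, t) - 1) / (g (t + d) * g t) = (S (u + d, u) - 1) / (g (u + d) * g u) := by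
    intro d t u ht htd hu hud
    have hder : ∀ v ∈ Set.Ioo (max a (a - d)) (min b (b - d)),
        HasDerivAt (fun v => (S (v + d, v) - 1) / (g (v + d) * g v)) 0 v := by
      intro v hv
      obtain ⟨h1, h2⟩ := hv
      rw [max_lt_iff] at h1
      rw [lt_min_iff] at h2
      have hvI : v ∈ Set.Ioo a b := ⟨h1.1, h2.1⟩
      have hvdI : v + d ∈ Set.Ioo a b := ⟨by linarith [h1.2], by linarith [h2.2]⟩
      have hSd := (hS (v + d, v) ⟨hvdI, hvI⟩).hasFDerivAt
      have hadd : HasDerivAt (fun v : ℝ => v + d) 1 v := (hasDerivAt_id v).add_const d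
      have hx : pdx S (v + d, v) = fderiv ℝ S (v + d, v) (1, 0) := by
        have hc : HasDerivAt (fun s : ℝ => (s, v)) ((1 : ℝ), (0 : ℝ)) (v + d) :=
          (hasDerivAt_id _).prodMk (hasDerivAt_const _ _)
        exact (HasFDerivAt.comp_hasDerivAt (v + d) hSd hc).deriv
      have hy : pdy S (v + d, v) = fderiv ℝ S (v + d, v) (0, 1) := by
        have hc : HasDerivAt (fun s : ℝ => (v + d, s)) ((0 : ℝ), (1 : ℝ)) v :=
          (hasDerivAt_const _ _).prodMk (hasDerivAt_id _)
        exact (HasFDerivAt.comp_hasDerivAt v hSd hc).deriv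
      have hc : HasDerivAt (fun s : ℝ => (s + d, s)) ((1 : ℝ), (1 : ℝ)) v :=
        hadd.prodMk (hasDerivAt_id _)
      have hSc : HasDerivAt (fun s : ℝ => S (s + d, s))
          (pdx S (v + d, v) + pdy S (v + d, v)) v := by
        have h := HasFDerivAt.comp_hasDerivAt (f := fun s : ℝ => (s + d, s)) v hSd hc
        have he : pdx S (v + d, v) + pdy S (v + d, v) = fderiv ℝ S (v + d, v) (1, 1) := by
          rw [hx, hy, ← map_add]
          simp
        rw [he]
        exact h
      have hg1 : HasDerivAt (fun s : ℝ => g (s + d)) (deriv g (v + d)) v :=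
        (hg _ hvdI).hasDerivAt.comp_add_const v d
      have hg2 := (hg _ hvI).hasDerivAt
      have n1 := hg0 _ hvdI
      have n2 := hg0 _ hvI
      have hq := (hSc.sub_const 1).fun_div (hg1.fun_mul hg2) (mul_ne_zero n1 n2)
      have hp := hpde _ hvdI _ hvI
      have hp2 : pdx S (v + d, v) + pdy S (v + d, v)
          = (deriv g (v + d) / g (v + d) + deriv g v / g v) * (S (v + d, v) - 1) := by
        linarith
      have hz : ((pdx S (v + d, v) + pdy S (v + d, v)) * (g (v + d) * g v) -
          (S (v + d, v) - 1) * (deriv g (v + d) * g v + g (v + d) * deriv g v)) /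
            (g (v + d) * g v) ^ 2 = 0 := by
        rw [hp2]
        field_simp
        ring
      rw [hz] at hq
      exact hq
    refine isOpen_Ioo.is_const_of_deriv_eq_zero isPreconnected_Ioo
      (f := fun v => (S (v + d, v) - 1) / (g (v + d) * g v))
      (s := Set.Ioo (max a (a - d)) (min b (b - d)))
      (fun v hv => (hder v hv).differentiableAt.differentiableWithinAt)
      (fun v hv => (hder v hv).deriv) ?_ ?_
    · exact ⟨max_lt ht.1 (by linarith [htd.1]), lt_min ht.2 (by linarith [htd.2])⟩
    · exact ⟨max_lt hu.1 (by linarith [hud.1]), lt_min hu.2 (by linarith [hud.2])⟩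
  classical
  let P : ℝ → ℝ → Prop := fun d t => t ∈ Set.Ioo a b ∧ t + d ∈ Set.Ioo a b
  let w : ℝ → ℝ := fun d => Classical.epsilon (P d)
  refine ⟨fun d => (S (w d + d, w d) - 1) / (g (w d + d) * g (w d)), ?_⟩
  intro x hx y hy
  have hP : P (x - y) y := ⟨hy, by simpa using hx⟩
  have hw : P (x - y) (w (x - y)) := Classical.epsilon_spec ⟨y, hP⟩
  have hk := key (x - y) (w (x - y)) y hw.1 hw.2 hP.1 hP.2
  have n1 := hg0 _ hx
  have n2 := hg0 _ hy
  beta_reduce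
  rw [hk, add_sub_cancel]
  field_simp
  ring
end

section
/- Goursat solution (equation (E14) solves (E11)). Define 𝒲(x, ξ) := ∑_{i=0}^m c_i Ψ_i(φ) Ψ_i(ϕ) T_{k_i}((r/ρ + ρ/r)/2) for x = (r cos φ, r sin φ) and ξ = (ρ cos ϕ, ρ sin ϕ). Then: (1) at all points with r > 0, ρ > 0, W(φ) ≠ 0 and W(ϕ) ≠ 0, one has −Δ_x 𝒲(x, ξ) + V_k(x)·𝒲(x, ξ) = 0, where Δ_x is the Laplacian in the variable x; and (2) 𝒲(x, x) = 1 whenever r > 0 and W(φ) ≠ 0. -/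
/-- The functions `χ_i(φ) = cos(k_i φ + θ_i)`. -/
noncomputable def chiF (m : ℕ) (k : Fin (m + 1) → ℤ) (θ : Fin (m + 1) → ℝ)
    (i : Fin (m + 1)) : ℝ → ℝ :=
  fun φ => Real.cos ((k i : ℝ) * φ + θ i)

/-- `W(φ) = Wr[χ_0, …, χ_m](φ)`. -/
noncomputable def Wfn (m : ℕ) (k : Fin (m + 1) → ℤ) (θ : Fin (m + 1) → ℝ) : ℝ → ℝ :=
  wronsk (chiF m k θ)

/-- `Ψ_i(φ) = Wr[χ_0, …, χ_{i-1}, χ_{i+1}, …, χ_m](φ) / W(φ)`. -/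
noncomputable def PsiF (m : ℕ) (k : Fin (m + 1) → ℤ) (θ : Fin (m + 1) → ℝ)
    (i : Fin (m + 1)) : ℝ → ℝ :=
  fun φ => wronsk (fun j : Fin m => chiF m k θ (i.succAbove j)) φ / Wfn m k θ φ

/-- `c_i = ∏_{j ≠ i} (k_i² − k_j²)`. -/
noncomputable def cF (m : ℕ) (k : Fin (m + 1) → ℤ) (i : Fin (m + 1)) : ℝ :=
  ∏ j ∈ Finset.univ.erase i, ((k i : ℝ) ^ 2 - (k j : ℝ) ^ 2)

/-- The Hadamard coefficients `U_ν` in polar coordinates: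
`U_ν = ((−2)^ν/(rρ)^ν) ∑_i c_i Ψ_i(φ) Ψ_i(ϕ) T_{k_i}^{(ν)}(cos(φ − ϕ))`. -/
noncomputable def Ucoef (m : ℕ) (k : Fin (m + 1) → ℤ) (θ : Fin (m + 1) → ℝ)
    (ν : ℕ) (r φ ρ ϕ : ℝ) : ℝ :=
  ((-2 : ℝ) ^ ν / (r * ρ) ^ ν) *
    ∑ i, cF m k i * PsiF m k θ i φ * PsiF m k θ i ϕ *
      (Polynomial.derivative^[ν] (Polynomial.Chebyshev.T ℝ (k i))).eval (Real.cos (φ - ϕ))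

/-- The potential `V_k` in polar coordinates: `V_k = −(2/r²)·(d²/dφ²) log W(φ)`. -/
noncomputable def Vpot (m : ℕ) (k : Fin (m + 1) → ℤ) (θ : Fin (m + 1) → ℝ)
    (r φ : ℝ) : ℝ :=
  -(2 / r ^ 2) * deriv (deriv fun t => Real.log (Wfn m k θ t)) φ

/-- The Laplacian on `ℝ²`. -/
noncomputable def lap2 (f : ℝ × ℝ → ℝ) (x : ℝ × ℝ) : ℝ := pdx (pdx f) x + pdy (pdy f) x


noncomputable def aF (m : ℕ) (k : Fin (m + 1) → ℤ) (θ : Fin (m + 1) → ℝ)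
    (i : Fin (m + 1)) (j : ℕ) (t : ℝ) : ℝ :=
  (k i : ℝ) ^ j * Real.cos ((k i : ℝ) * t + θ i + j * (Real.pi / 2))

noncomputable def bF (m : ℕ) (k : Fin (m + 1) → ℤ) (θ : Fin (m + 1) → ℝ)
    (i : Fin (m + 1)) (j : ℕ) (t : ℝ) : ℝ :=
  (k i : ℝ) ^ j * Real.sin ((k i : ℝ) * t + θ i + j * (Real.pi / 2))

lemma aF_succ (m : ℕ) (k : Fin (m + 1) → ℤ) (θ : Fin (m + 1) → ℝ)
    (i : Fin (m + 1)) (j : ℕ) (t : ℝ) :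
    aF m k θ i (j + 1) t = - (k i : ℝ) * bF m k θ i j t := by
  unfold aF bF
  have : (k i : ℝ) * t + θ i + ((j + 1 : ℕ) : ℝ) * (Real.pi / 2)
      = ((k i : ℝ) * t + θ i + j * (Real.pi / 2)) + Real.pi / 2 := by push_cast; ring
  rw [this, Real.cos_add_pi_div_two]; ring

lemma bF_succ (m : ℕ) (k : Fin (m + 1) → ℤ) (θ : Fin (m + 1) → ℝ)
    (i : Fin (m + 1)) (j : ℕ) (t : ℝ) :
    bF m k θ i (j + 1) t = (k i : ℝ) * aF m k θ i j t := by
  unfold aF bF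
  have : (k i : ℝ) * t + θ i + ((j + 1 : ℕ) : ℝ) * (Real.pi / 2)
      = ((k i : ℝ) * t + θ i + j * (Real.pi / 2)) + Real.pi / 2 := by push_cast; ring
  rw [this, Real.sin_add_pi_div_two]; ring

lemma aF_hasDerivAt (m : ℕ) (k : Fin (m + 1) → ℤ) (θ : Fin (m + 1) → ℝ)
    (i : Fin (m + 1)) (j : ℕ) (t : ℝ) :
    HasDerivAt (aF m k θ i j) (aF m k θ i (j + 1) t) t := by
  rw [aF_succ]
  have h1 : HasDerivAt (fun t : ℝ => (k i : ℝ) * t + θ i + j * (Real.pi / 2)) (k i : ℝ) t := by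
    simpa using (((hasDerivAt_id t).const_mul (k i : ℝ)).add_const (θ i)).add_const
      ((j : ℝ) * (Real.pi / 2))
  have h2 := (h1.cos).const_mul ((k i : ℝ) ^ j)
  refine h2.congr_deriv ?_
  unfold bF; ring

lemma iter_chi (m : ℕ) (k : Fin (m + 1) → ℤ) (θ : Fin (m + 1) → ℝ)
    (i : Fin (m + 1)) (j : ℕ) :
    iteratedDeriv j (chiF m k θ i) = aF m k θ i j := by
  induction j with
  | zero => funext t; simp [chiF, aF]
  | succ j ih =>
    rw [iteratedDeriv_succ, ih]
    funext t
    exact (aF_hasDerivAt m k θ i j t).deriv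

lemma aF_contDiff (m : ℕ) (k : Fin (m + 1) → ℤ) (θ : Fin (m + 1) → ℝ)
    (i : Fin (m + 1)) (j : ℕ) : ContDiff ℝ 2 (aF m k θ i j) := by
  unfold aF
  fun_prop

/-- The Wronskian matrix. -/
noncomputable def AM (m : ℕ) (k : Fin (m + 1) → ℤ) (θ : Fin (m + 1) → ℝ) (t : ℝ) :
    Matrix (Fin (m + 1)) (Fin (m + 1)) ℝ :=
  Matrix.of fun i j => aF m k θ i (j : ℕ) t

lemma Wfn_eq (m : ℕ) (k : Fin (m + 1) → ℤ) (θ : Fin (m + 1) → ℝ) (t : ℝ) :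
    Wfn m k θ t = (AM m k θ t).det := by
  unfold Wfn wronsk AM
  simp only [iter_chi]

lemma wronsk_omit_eq (m : ℕ) (k : Fin (m + 1) → ℤ) (θ : Fin (m + 1) → ℝ) (i : Fin (m + 1))
    (t : ℝ) :
    wronsk (fun j : Fin m => chiF m k θ (i.succAbove j)) t
      = ((AM m k θ t).submatrix i.succAbove (Fin.last m).succAbove).det := by
  unfold wronsk AM
  congr 1
  ext a b
  simp [iter_chi]

lemma wronsk_contDiff {n : ℕ} (m : ℕ) (k : Fin (m + 1) → ℤ) (θ : Fin (m + 1) → ℝ)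
    (e : Fin n → Fin (m + 1)) :
    ContDiff ℝ 2 (wronsk (fun j : Fin n => chiF m k θ (e j))) := by
  unfold wronsk
  simp only [iter_chi, Matrix.det_apply, Matrix.of_apply]
  refine ContDiff.sum fun σ _ => ?_
  refine ContDiff.const_smul _ ?_
  exact contDiff_prod fun j _ => aF_contDiff _ _ _ _ _

noncomputable def uF (m : ℕ) (k : Fin (m + 1) → ℤ) (θ : Fin (m + 1) → ℝ)
    (i : Fin (m + 1)) (t : ℝ) : ℝ :=
  (-1) ^ ((i : ℕ) + m) * PsiF m k θ i t

lemma sum_uF (m : ℕ) (k : Fin (m + 1) → ℤ) (θ : Fin (m + 1) → ℝ) (t : ℝ)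
    (b : Fin (m + 1) → ℝ) :
    ∑ i, uF m k θ i t * b i =
      ((AM m k θ t).updateCol (Fin.last m) b).det / Wfn m k θ t := by
  rw [Matrix.det_succ_column _ (Fin.last m), Finset.sum_div]
  refine Finset.sum_congr rfl fun i _ => ?_
  unfold uF PsiF
  rw [Matrix.updateCol_self, wronsk_omit_eq, Matrix.submatrix_updateCol_succAbove, Fin.val_last]
  ring

lemma S_lt (m : ℕ) (k : Fin (m + 1) → ℤ) (θ : Fin (m + 1) → ℝ) (t : ℝ) (j : ℕ) (hj : j < m) :
    ∑ i, uF m k θ i t * aF m k θ i j t = 0 := by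
  rw [sum_uF, Matrix.det_zero_of_column_eq (i := ⟨j, by omega⟩) (j := Fin.last m), zero_div]
  · intro h; have := congrArg Fin.val h; simp at this; omega
  · intro i
    rw [Matrix.updateCol_self, Matrix.updateCol_ne]
    · rfl
    · intro h; have := congrArg Fin.val h; simp at this; omega

lemma S_m (m : ℕ) (k : Fin (m + 1) → ℤ) (θ : Fin (m + 1) → ℝ) (t : ℝ)
    (hW : Wfn m k θ t ≠ 0) :
    ∑ i, uF m k θ i t * aF m k θ i m t = 1 := by
  rw [sum_uF]
  have : (AM m k θ t).updateCol (Fin.last m) (fun i => aF m k θ i m t) = AM m k θ t := by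
    conv_rhs => rw [← Matrix.updateCol_eq_self (AM m k θ t) (Fin.last m)]
    rfl
  rw [this, ← Wfn_eq, div_self hW]

lemma uniq (m : ℕ) (k : Fin (m + 1) → ℤ) (θ : Fin (m + 1) → ℝ) (t : ℝ)
    (hW : Wfn m k θ t ≠ 0) (v : Fin (m + 1) → ℝ)
    (hv : ∀ j, j ≤ m → ∑ i, v i * aF m k θ i j t = 0) : v = 0 := by
  rw [Wfn_eq] at hW
  refine Matrix.eq_zero_of_vecMul_eq_zero hW ?_
  funext j
  exact hv j (by omega)

lemma W_hasDerivAt (m : ℕ) (k : Fin (m + 1) → ℤ) (θ : Fin (m + 1) → ℝ) (t : ℝ) :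
    HasDerivAt (Wfn m k θ)
      (((AM m k θ t).updateCol (Fin.last m) (fun i => aF m k θ i (m + 1) t)).det) t := by
  have e : Wfn m k θ = fun t => (AM m k θ t).det := by funext t; exact Wfn_eq m k θ t
  rw [e]
  have key : HasDerivAt (fun t => (AM m k θ t).det)
      (∑ j, ((AM m k θ t).updateCol j (fun i => aF m k θ i (j + 1) t)).det) t := by
    simp only [Matrix.det_apply]
    rw [Finset.sum_comm]
    refine HasDerivAt.fun_sum fun σ _ => ?_
    rw [← Finset.smul_sum]
    refine HasDerivAt.fun_const_smul _ ?_
    have h := HasDerivAt.fun_finsetProd (u := Finset.univ) (x := t)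
      (f := fun j : Fin (m + 1) => aF m k θ (σ j) (j : ℕ))
      (f' := fun j : Fin (m + 1) => aF m k θ (σ j) ((j : ℕ) + 1) t)
      (fun j _ => aF_hasDerivAt m k θ (σ j) (j : ℕ) t)
    refine h.congr_deriv ?_
    refine Finset.sum_congr rfl fun j _ => ?_
    rw [← Finset.prod_erase_mul _ _ (Finset.mem_univ j), Matrix.updateCol_self, smul_eq_mul]
    congr 1
    refine Finset.prod_congr rfl fun l hl => ?_
    rw [Matrix.updateCol_ne (Finset.ne_of_mem_erase hl)]
    rfl
  refine key.congr_deriv ?_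
  rw [Finset.sum_eq_single (Fin.last m)]
  · simp
  · intro j _ hj
    have hj' : (j : ℕ) < m := by
      have := j.2
      have : (j : ℕ) ≠ m := fun h => hj (Fin.ext (by simpa using h))
      omega
    have hne : (⟨(j : ℕ) + 1, by omega⟩ : Fin (m + 1)) ≠ j := by
      intro h; have := congrArg Fin.val h; simp at this
    refine Matrix.det_zero_of_column_eq hne.symm ?_
    intro i
    rw [Matrix.updateCol_self, Matrix.updateCol_ne hne]
    rfl
  · simp

lemma S_m1 (m : ℕ) (k : Fin (m + 1) → ℤ) (θ : Fin (m + 1) → ℝ) (t : ℝ) :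
    ∑ i, uF m k θ i t * aF m k θ i (m + 1) t = deriv (Wfn m k θ) t / Wfn m k θ t := by
  rw [sum_uF, (W_hasDerivAt m k θ t).deriv]

lemma U_open (m : ℕ) (k : Fin (m + 1) → ℤ) (θ : Fin (m + 1) → ℝ) :
    IsOpen {t | Wfn m k θ t ≠ 0} := by
  have h : ContDiff ℝ 2 (Wfn m k θ) := wronsk_contDiff m k θ id
  exact isOpen_ne_fun h.continuous continuous_const

lemma Psi_contDiffOn (m : ℕ) (k : Fin (m + 1) → ℤ) (θ : Fin (m + 1) → ℝ) (i : Fin (m + 1)) :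
    ContDiffOn ℝ 2 (PsiF m k θ i) {t | Wfn m k θ t ≠ 0} := by
  have h : ContDiff ℝ 2 (Wfn m k θ) := wronsk_contDiff m k θ id
  exact ((wronsk_contDiff m k θ i.succAbove).contDiffOn).div h.contDiffOn (fun t ht => ht)

lemma contDiffOn_two_derivs {f : ℝ → ℝ} {U : Set ℝ} (hU : IsOpen U) (hf : ContDiffOn ℝ 2 f U)
    {t : ℝ} (ht : t ∈ U) :
    HasDerivAt f (deriv f t) t ∧ HasDerivAt (deriv f) (deriv (deriv f) t) t := by
  constructor
  · exact ((hf.differentiableOn (by norm_num)).differentiableAt (hU.mem_nhds ht)).hasDerivAt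
  · have := hf.deriv_of_isOpen (m := 1) hU (by norm_num)
    exact ((this.differentiableOn (by norm_num)).differentiableAt (hU.mem_nhds ht)).hasDerivAt

lemma aF_add_two (m : ℕ) (k : Fin (m + 1) → ℤ) (θ : Fin (m + 1) → ℝ)
    (i : Fin (m + 1)) (j : ℕ) (t : ℝ) :
    aF m k θ i (j + 2) t = - (k i : ℝ) ^ 2 * aF m k θ i j t := by
  rw [show j + 2 = (j + 1) + 1 from rfl, aF_succ, bF_succ]; ring

lemma u_ode (m : ℕ) (k : Fin (m + 1) → ℤ) (θ : Fin (m + 1) → ℝ) (t : ℝ)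
    (hW : Wfn m k θ t ≠ 0) (i : Fin (m + 1)) :
    deriv (deriv (uF m k θ i)) t + (k i : ℝ) ^ 2 * uF m k θ i t
      + 2 * deriv (deriv fun t => Real.log (Wfn m k θ t)) t * uF m k θ i t = 0 := by
  have hU := U_open m k θ
  have hu : ∀ i, ContDiffOn ℝ 2 (uF m k θ i) {t | Wfn m k θ t ≠ 0} := fun i =>
    contDiffOn_const.mul (Psi_contDiffOn m k θ i)
  have h1 : ∀ i t, Wfn m k θ t ≠ 0 → HasDerivAt (uF m k θ i) (deriv (uF m k θ i) t) t :=
    fun i t ht => (contDiffOn_two_derivs hU (hu i) ht).1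
  have h2 : ∀ i t, Wfn m k θ t ≠ 0 →
      HasDerivAt (deriv (uF m k θ i)) (deriv (deriv (uF m k θ i)) t) t :=
    fun i t ht => (contDiffOn_two_derivs hU (hu i) ht).2
  have hev : ∀ᶠ s in nhds t, Wfn m k θ s ≠ 0 := hU.mem_nhds hW
  set S : ℕ → ℝ → ℝ := fun j s => ∑ i, uF m k θ i s * aF m k θ i j s with hS
  set D : ℕ → ℝ → ℝ := fun j s => ∑ i, deriv (uF m k θ i) s * aF m k θ i j s with hD
  set E : ℕ → ℝ → ℝ := fun j s => ∑ i, deriv (deriv (uF m k θ i)) s * aF m k θ i j s with hE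
  have SD : ∀ j s, Wfn m k θ s ≠ 0 → HasDerivAt (S j) (D j s + S (j + 1) s) s := by
    intro j s hs
    have := HasDerivAt.fun_sum (u := Finset.univ)
      (fun i _ => (h1 i s hs).mul (aF_hasDerivAt m k θ i j s))
    refine this.congr_deriv ?_
    rw [Finset.sum_add_distrib]
  have DD : ∀ j s, Wfn m k θ s ≠ 0 → HasDerivAt (D j) (E j s + D (j + 1) s) s := by
    intro j s hs
    have := HasDerivAt.fun_sum (u := Finset.univ)
      (fun i _ => (h2 i s hs).mul (aF_hasDerivAt m k θ i j s))
    refine this.congr_deriv ?_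
    rw [Finset.sum_add_distrib]
  have Sconst : ∀ j s, j ≤ m → Wfn m k θ s ≠ 0 → HasDerivAt (S j) 0 s := by
    intro j s hj hs
    have hevs : ∀ᶠ x in nhds s, Wfn m k θ x ≠ 0 := hU.mem_nhds hs
    rcases hj.lt_or_eq with h | h
    · have e : S j = fun _ => 0 := by funext x; exact S_lt m k θ x j h
      rw [e]; exact hasDerivAt_const s 0
    · refine (hasDerivAt_const s (1 : ℝ)).congr_of_eventuallyEq ?_
      filter_upwards [hevs] with x hx
      rw [h]; exact S_m m k θ x hx
  have DS : ∀ j s, j ≤ m → Wfn m k θ s ≠ 0 → D j s = - S (j + 1) s := by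
    intro j s hj hs
    have := (SD j s hs).unique (Sconst j s hj hs)
    linarith
  have ES : ∀ j, j ≤ m → E j t - S (j + 2) t = -2 * deriv (S (j + 1)) t := by
    intro j hj
    have a1 := DD j t hW
    have a2 : HasDerivAt (D j) (-(D (j + 1) t + S (j + 2) t)) t := by
      refine (SD (j + 1) t hW).neg.congr_of_eventuallyEq ?_
      filter_upwards [hev] with x hx
      exact DS j x hj hx
    have a3 := a1.unique a2
    rw [(SD (j + 1) t hW).deriv]
    simp only [show j + 1 + 1 = j + 2 from rfl]
    linarith
  have hg : deriv (deriv fun t => Real.log (Wfn m k θ t)) t = deriv (S (m + 1)) t := by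
    apply Filter.EventuallyEq.deriv_eq
    filter_upwards [hev] with x hx
    rw [((W_hasDerivAt m k θ x).log hx).deriv]
    simp only [hS]
    rw [S_m1, (W_hasDerivAt m k θ x).deriv]
  rw [hg]
  set g := deriv (S (m + 1)) t with hgdef
  have := uniq m k θ t hW (fun i => deriv (deriv (uF m k θ i)) t + (k i : ℝ) ^ 2 * uF m k θ i t
      + 2 * g * uF m k θ i t) ?_
  · exact congrFun this i
  intro j hj
  have e : ∑ i, (deriv (deriv (uF m k θ i)) t + (k i : ℝ) ^ 2 * uF m k θ i t
      + 2 * g * uF m k θ i t) * aF m k θ i j t = E j t - S (j + 2) t + 2 * g * S j t := by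
    simp only [hE, hS]
    rw [Finset.mul_sum, ← Finset.sum_sub_distrib, ← Finset.sum_add_distrib]
    refine Finset.sum_congr rfl fun i _ => ?_
    rw [aF_add_two]; ring
  rw [e, ES j hj]
  rcases hj.lt_or_eq with h | h
  · rw [(Sconst (j + 1) t h hW).deriv]
    have : S j t = 0 := S_lt m k θ t j h
    rw [this]; ring
  · subst h
    have : S j t = 1 := S_m j k θ t hW
    rw [this, ← hgdef]; ring

lemma Psi_ode (m : ℕ) (k : Fin (m + 1) → ℤ) (θ : Fin (m + 1) → ℝ) (t : ℝ)
    (hW : Wfn m k θ t ≠ 0) (i : Fin (m + 1)) :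
    deriv (deriv (PsiF m k θ i)) t = -((k i : ℝ) ^ 2 * PsiF m k θ i t)
      - 2 * deriv (deriv fun t => Real.log (Wfn m k θ t)) t * PsiF m k θ i t := by
  have h := u_ode m k θ t hW i
  have e : uF m k θ i = fun t => (-1) ^ ((i : ℕ) + m) * PsiF m k θ i t := rfl
  have e1 : deriv (uF m k θ i) = fun t => (-1) ^ ((i : ℕ) + m) * deriv (PsiF m k θ i) t := by
    funext s; rw [e, deriv_const_mul_field]
  have e2 : deriv (deriv (uF m k θ i)) t
      = (-1) ^ ((i : ℕ) + m) * deriv (deriv (PsiF m k θ i)) t := by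
    rw [e1, deriv_const_mul_field]
  rw [e2, e] at h
  have hne : ((-1 : ℝ)) ^ ((i : ℕ) + m) ≠ 0 := pow_ne_zero _ (by norm_num)
  have : ((-1 : ℝ)) ^ ((i : ℕ) + m) * (deriv (deriv (PsiF m k θ i)) t
    + (k i : ℝ) ^ 2 * PsiF m k θ i t
    + 2 * deriv (deriv fun t => Real.log (Wfn m k θ t)) t * PsiF m k θ i t) = 0 := by
    rw [← h]; ring
  have := (mul_eq_zero.1 this).resolve_left hne
  linarith

lemma lagrange_sum (m : ℕ) (k : Fin (m + 1) → ℤ) (hk0 : k 0 = 0) (hk : StrictMono k)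
    (s : ℕ) (hs : s ≤ m) :
    ∑ i, ((k i : ℝ) ^ 2) ^ s / cF m k i = if s = m then 1 else 0 := by
  have hnn : ∀ i, 0 ≤ k i := fun i => hk0 ▸ hk.monotone (Fin.zero_le i)
  have hinj : Set.InjOn (fun i => (k i : ℝ) ^ 2) (Finset.univ : Finset (Fin (m + 1))) := by
    intro a _ b _ hab
    have ha : (0 : ℝ) ≤ k a := by exact_mod_cast hnn a
    have hb : (0 : ℝ) ≤ k b := by exact_mod_cast hnn b
    have : (k a : ℝ) = k b := (pow_left_inj₀ ha hb two_ne_zero).1 hab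
    exact hk.injective (by exact_mod_cast this)
  have h := Lagrange.coeff_eq_sum hinj (P := (Polynomial.X : Polynomial ℝ) ^ s) (by
    rw [Polynomial.degree_X_pow]; simp only [Finset.card_univ, Fintype.card_fin]
    exact_mod_cast Nat.lt_succ_of_le hs)
  simp only [Polynomial.coeff_X_pow, Finset.card_univ, Fintype.card_fin, Nat.add_sub_cancel,
    Polynomial.eval_pow, Polynomial.eval_X] at h
  unfold cF
  rw [← h]
  simp only [eq_comm]

lemma cF_ne (m : ℕ) (k : Fin (m + 1) → ℤ) (hk0 : k 0 = 0) (hk : StrictMono k)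
    (i : Fin (m + 1)) : cF m k i ≠ 0 := by
  have hnn : ∀ i, 0 ≤ k i := fun i => hk0 ▸ hk.monotone (Fin.zero_le i)
  refine Finset.prod_ne_zero_iff.2 fun j hj => ?_
  intro h
  have ha : (0 : ℝ) ≤ k i := by exact_mod_cast hnn i
  have hb : (0 : ℝ) ≤ k j := by exact_mod_cast hnn j
  have : (k i : ℝ) = k j := (pow_left_inj₀ ha hb two_ne_zero).1 (by linarith)
  exact Finset.ne_of_mem_erase hj (hk.injective (by exact_mod_cast this)).symm

lemma gram (m : ℕ) (k : Fin (m + 1) → ℤ) (hk0 : k 0 = 0) (hk : StrictMono k)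
    (θ : Fin (m + 1) → ℝ) (t : ℝ) (l j : ℕ) (hl : l ≤ m) (hj : j ≤ m) :
    ∑ i, (aF m k θ i l t * aF m k θ i j t + bF m k θ i l t * bF m k θ i j t) / cF m k i
      = if l = m ∧ j = m then 1 else 0 := by
  have e : ∀ i, aF m k θ i l t * aF m k θ i j t + bF m k θ i l t * bF m k θ i j t
      = (k i : ℝ) ^ (l + j) * Real.cos (((l : ℝ) - j) * (Real.pi / 2)) := by
    intro i
    have : ((l : ℝ) - j) * (Real.pi / 2) = ((k i : ℝ) * t + θ i + l * (Real.pi / 2))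
      - ((k i : ℝ) * t + θ i + j * (Real.pi / 2)) := by ring
    rw [this, Real.cos_sub, pow_add]
    unfold aF bF; ring
  simp only [e]
  rcases Nat.even_or_odd' (l + j) with ⟨s, hs | hs⟩
  · have hsm : s ≤ m := by omega
    have e2 : ∀ i, (k i : ℝ) ^ (l + j) * Real.cos (((l : ℝ) - j) * (Real.pi / 2)) / cF m k i
      = Real.cos (((l : ℝ) - j) * (Real.pi / 2)) * (((k i : ℝ) ^ 2) ^ s / cF m k i) := by
      intro i; rw [hs, pow_mul]; ring
    simp only [e2]
    rw [← Finset.mul_sum, lagrange_sum m k hk0 hk s hsm]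
    by_cases h : s = m
    · have h1 : l = m := by omega
      have h2 : j = m := by omega
      subst h1; subst h2; simp [h]
    · have : ¬ (l = m ∧ j = m) := by omega
      simp [h, this]
  · have : ¬ (l = m ∧ j = m) := by omega
    rw [if_neg this]
    have hc : Real.cos (((l : ℝ) - j) * (Real.pi / 2)) = 0 := by
      rw [Real.cos_eq_zero_iff]
      refine ⟨(s : ℤ) - j, ?_⟩
      have : (l : ℝ) + j = 2 * s + 1 := by exact_mod_cast hs
      have : (l : ℝ) = 2 * s + 1 - j := by linarith
      rw [this]; push_cast; ring
    simp [hc]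

lemma exists_q (m : ℕ) (k : Fin (m + 1) → ℤ) (hk0 : k 0 = 0) (hk : StrictMono k)
    (θ : Fin (m + 1) → ℝ) (hθ0 : θ 0 = 0) (t : ℝ) (hW : Wfn m k θ t ≠ 0) :
    ∃ q : ℕ → ℝ, q m = 1 ∧ ∀ i, ∑ l ∈ Finset.range (m + 1), q l * bF m k θ i l t = 0 := by
  rw [Wfn_eq] at hW
  set A := AM m k θ t with hA
  set y : Fin (m + 1) → ℝ := fun i => - aF m k θ i (m + 1) t with hy
  have hp : A.mulVec (A⁻¹.mulVec y) = y := by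
    rw [Matrix.mulVec_mulVec, Matrix.mul_nonsing_inv _ (isUnit_iff_ne_zero.2 hW),
      Matrix.one_mulVec]
  set p := A⁻¹.mulVec y with hpdef
  set P : ℕ → ℝ := fun l => if h : l < m + 1 then p ⟨l, h⟩ else 1 with hP
  have hsum : ∀ i, ∑ l ∈ Finset.range (m + 2), P l * aF m k θ i l t = 0 := by
    intro i
    rw [Finset.sum_range_succ, Finset.sum_range]
    have h1 := congrFun hp i
    have h2 : ∑ l : Fin (m + 1), P l * aF m k θ i l t = y i := by
      rw [← h1]
      simp only [Matrix.mulVec, dotProduct]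
      refine Finset.sum_congr rfl fun l _ => ?_
      have : P l = p l := by simp only [hP]; rw [dif_pos l.2]
      rw [this, mul_comm]; rfl
    rw [h2]
    simp [hP, hy]
  have hP0 : P 0 = 0 := by
    have h := hsum 0
    rw [Finset.sum_range_succ'] at h
    simpa [aF, hk0, hθ0] using h
  refine ⟨fun l => P (l + 1), by simp [hP], fun i => ?_⟩
  by_cases hi : i = 0
  · subst hi
    refine Finset.sum_eq_zero fun l _ => ?_
    rcases Nat.eq_zero_or_pos l with h | h
    · subst h; simp [bF, hk0, hθ0]
    · simp [bF, hk0, h.ne']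
  · have h := hsum i
    rw [Finset.sum_range_succ', hP0] at h
    simp only [aF_succ] at h
    have hki : (k i : ℝ) ≠ 0 := by
      have : k 0 < k i := hk (Fin.pos_of_ne_zero hi)
      rw [hk0] at this
      exact_mod_cast this.ne'
    have h' : (-(k i : ℝ)) * ∑ l ∈ Finset.range (m + 1), P (l + 1) * bF m k θ i l t = 0 := by
      rw [← h, zero_mul, add_zero, Finset.mul_sum]
      refine Finset.sum_congr rfl fun l _ => ?_
      ring
    exact (mul_eq_zero.1 h').resolve_left (neg_ne_zero.2 hki)

lemma sum_c_u_sq (m : ℕ) (k : Fin (m + 1) → ℤ) (hk0 : k 0 = 0) (hk : StrictMono k)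
    (θ : Fin (m + 1) → ℝ) (hθ0 : θ 0 = 0) (t : ℝ) (hW : Wfn m k θ t ≠ 0) :
    ∑ i, cF m k i * uF m k θ i t ^ 2 = 1 := by
  obtain ⟨q, hqm, hq⟩ := exists_q m k hk0 hk θ hθ0 t hW
  set y : Fin (m + 1) → ℝ := fun i => ∑ l ∈ Finset.range (m + 1), q l * aF m k θ i l t with hy
  have key : ∀ j, j ≤ m → ∑ i, (y i / cF m k i) * aF m k θ i j t = if j = m then 1 else 0 := by
    intro j hj
    have e1 : ∀ i, (y i / cF m k i) * aF m k θ i j t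
        = ∑ l ∈ Finset.range (m + 1), q l *
          ((aF m k θ i l t * aF m k θ i j t + bF m k θ i l t * bF m k θ i j t) / cF m k i) := by
      intro i
      have : (y i / cF m k i) * aF m k θ i j t = (y i * aF m k θ i j t
        + (∑ l ∈ Finset.range (m + 1), q l * bF m k θ i l t) * bF m k θ i j t) / cF m k i := by
        rw [hq i]; ring
      rw [this]
      simp only [hy]
      rw [Finset.sum_mul, Finset.sum_mul, ← Finset.sum_add_distrib, Finset.sum_div]
      refine Finset.sum_congr rfl fun l _ => ?_
      ring
    simp only [e1]
    rw [Finset.sum_comm]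
    have e2 : ∀ l ∈ Finset.range (m + 1), ∑ i, q l *
          ((aF m k θ i l t * aF m k θ i j t + bF m k θ i l t * bF m k θ i j t) / cF m k i)
        = q l * if l = m ∧ j = m then 1 else 0 := by
      intro l hl
      rw [← Finset.mul_sum, gram m k hk0 hk θ t l j (by simp at hl; omega) hj]
    rw [Finset.sum_congr rfl e2, Finset.sum_range_succ, Finset.sum_eq_zero, hqm]
    · simp
    · intro l hl
      have : l ≠ m := by simp at hl; omega
      simp [this]
  have hu : (fun i => y i / cF m k i - uF m k θ i t) = 0 := by
    apply uniq m k θ t hW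
    intro j hj
    simp only [sub_mul]
    rw [Finset.sum_sub_distrib, key j hj]
    rcases hj.lt_or_eq with h | h
    · rw [S_lt m k θ t j h, if_neg h.ne, sub_zero]
    · rw [if_pos h, h, S_m m k θ t hW, sub_self]
  have e3 : ∀ i, cF m k i * uF m k θ i t ^ 2
      = ∑ l ∈ Finset.range (m + 1), q l * (uF m k θ i t * aF m k θ i l t) := by
    intro i
    have h1 : y i / cF m k i = uF m k θ i t := by
      have := congrFun hu i
      simp only [Pi.zero_apply] at this
      linarith
    have h2 : cF m k i * uF m k θ i t = y i := by
      rw [← h1]; field_simp [cF_ne m k hk0 hk i]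
    have : cF m k i * uF m k θ i t ^ 2 = y i * uF m k θ i t := by rw [← h2]; ring
    rw [this]
    simp only [hy]
    rw [Finset.sum_mul]
    refine Finset.sum_congr rfl fun l _ => ?_
    ring
  simp only [e3]
  rw [Finset.sum_comm]
  simp only [← Finset.mul_sum]
  rw [Finset.sum_range_succ, S_m m k θ t hW, hqm, Finset.sum_eq_zero]
  · simp
  · intro l hl
    rw [S_lt m k θ t l (by simpa using hl), mul_zero]

lemma dir_first {c s : ℝ} {al R ψ ψ1 τ τ1 : ℝ → ℝ}
    (hal : HasDerivAt al (c / R s ^ 2) s) (hR : HasDerivAt R (s / R s) s)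
    (hψ : HasDerivAt ψ (ψ1 (al s)) (al s)) (hτ : HasDerivAt τ (τ1 (R s)) (R s)) :
    HasDerivAt (fun s => ψ (al s) * τ (R s))
      (ψ1 (al s) * (c / R s ^ 2) * τ (R s) + ψ (al s) * (τ1 (R s) * (s / R s))) s :=
  (hψ.comp s hal).mul (hτ.comp s hR)

lemma dir_second {c s p2 t2 : ℝ} {al R ψ ψ1 τ τ1 : ℝ → ℝ}
    (hal : HasDerivAt al (c / R s ^ 2) s) (hR : HasDerivAt R (s / R s) s) (hR0 : R s ≠ 0)
    (hψ : HasDerivAt ψ (ψ1 (al s)) (al s)) (hτ : HasDerivAt τ (τ1 (R s)) (R s))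
    (hψ1 : HasDerivAt ψ1 p2 (al s)) (hτ1 : HasDerivAt τ1 t2 (R s)) :
    HasDerivAt (fun s => ψ1 (al s) * (c / R s ^ 2) * τ (R s) + ψ (al s) * (τ1 (R s) * (s / R s)))
      (p2 * τ (R s) * c ^ 2 / R s ^ 4 - 2 * ψ1 (al s) * τ (R s) * (c * s) / R s ^ 4
        + 2 * ψ1 (al s) * τ1 (R s) * (c * s) / R s ^ 3
        + ψ (al s) * t2 * s ^ 2 / R s ^ 2
        + ψ (al s) * τ1 (R s) * (1 / R s - s ^ 2 / R s ^ 3)) s := by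
  have h1 := hψ.comp s hal
  have h2 := hτ.comp s hR
  have h3 := hψ1.comp s hal
  have h4 := hτ1.comp s hR
  have h5 : HasDerivAt (fun s => c / R s ^ 2) (-2 * c * s / R s ^ 4) s := by
    refine ((hasDerivAt_const s c).div (hR.pow 2) (pow_ne_zero 2 hR0)).congr_deriv ?_
    simp only [Pi.pow_apply]
    field_simp
    ring
  have h6 : HasDerivAt (fun s => s / R s) (1 / R s - s ^ 2 / R s ^ 3) s := by
    refine ((hasDerivAt_id s).div hR hR0).congr_deriv ?_
    simp only [id]
    field_simp
  refine (((h3.mul h5).mul h2).add (h1.mul (h4.mul h6))).congr_deriv ?_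
  simp only [Function.comp, Pi.mul_apply]
  field_simp
  ring

noncomputable def RR (y : ℝ × ℝ) : ℝ := Real.sqrt (y.1 ^ 2 + y.2 ^ 2)
noncomputable def pp (φ : ℝ) (y : ℝ × ℝ) : ℝ := y.1 * Real.cos φ + y.2 * Real.sin φ
noncomputable def qq (φ : ℝ) (y : ℝ × ℝ) : ℝ := -y.1 * Real.sin φ + y.2 * Real.cos φ
noncomputable def aa (φ : ℝ) (y : ℝ × ℝ) : ℝ := φ + Real.arctan (qq φ y / pp φ y)

lemma pq_sq (φ : ℝ) (y : ℝ × ℝ) : pp φ y ^ 2 + qq φ y ^ 2 = y.1 ^ 2 + y.2 ^ 2 := by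
  unfold pp qq
  have := Real.sin_sq_add_cos_sq φ
  linear_combination (y.1 ^ 2 + y.2 ^ 2) * this

lemma sq_pos {φ : ℝ} {y : ℝ × ℝ} (h : 0 < pp φ y) : 0 < y.1 ^ 2 + y.2 ^ 2 := by
  rw [← pq_sq φ y]; positivity

lemma RR_pos {φ : ℝ} {y : ℝ × ℝ} (h : 0 < pp φ y) : 0 < RR y :=
  Real.sqrt_pos.2 (sq_pos h)

lemma RR_sq (y : ℝ × ℝ) : RR y ^ 2 = y.1 ^ 2 + y.2 ^ 2 := Real.sq_sqrt (by positivity)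

lemma polar_rep {φ : ℝ} {y : ℝ × ℝ} (h : 0 < pp φ y) :
    y = (RR y * Real.cos (aa φ y), RR y * Real.sin (aa φ y)) := by
  have hs : Real.sqrt (1 + (qq φ y / pp φ y) ^ 2) = RR y / pp φ y := by
    rw [Real.sqrt_eq_iff_mul_self_eq (by positivity) (div_pos (RR_pos h) h).le]
    have := pq_sq φ y
    rw [← RR_sq] at this
    field_simp
    linarith
  have hR := RR_pos h
  have hc : RR y * Real.cos (Real.arctan (qq φ y / pp φ y)) = pp φ y := by
    rw [Real.cos_arctan, hs]; field_simp
  have hsn : RR y * Real.sin (Real.arctan (qq φ y / pp φ y)) = qq φ y := by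
    rw [Real.sin_arctan, hs]; field_simp
  have h1 := Real.sin_sq_add_cos_sq φ
  unfold aa
  rw [Real.cos_add, Real.sin_add]
  ext
  · simp only
    rw [mul_sub, mul_left_comm, hc, mul_left_comm, hsn]
    unfold pp qq
    linear_combination (-y.1) * h1
  · simp only
    rw [mul_add, mul_left_comm, hc, mul_left_comm, hsn]
    unfold pp qq
    linear_combination (-y.2) * h1

lemma RR_x {φ : ℝ} {a b : ℝ} (h : 0 < pp φ (a, b)) :
    HasDerivAt (fun s => RR (s, b)) (a / RR (a, b)) a := by
  have h1 : HasDerivAt (fun s : ℝ => s ^ 2 + b ^ 2) (2 * a) a := by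
    simpa using (hasDerivAt_pow 2 a).add_const (b ^ 2)
  refine (h1.sqrt (sq_pos h).ne').congr_deriv ?_
  unfold RR
  simp only
  rw [mul_div_mul_left _ _ two_ne_zero]

lemma RR_y {φ : ℝ} {a b : ℝ} (h : 0 < pp φ (a, b)) :
    HasDerivAt (fun s => RR (a, s)) (b / RR (a, b)) b := by
  have h1 : HasDerivAt (fun s : ℝ => a ^ 2 + s ^ 2) (2 * b) b := by
    simpa using (hasDerivAt_pow 2 b).const_add (a ^ 2)
  refine (h1.sqrt (sq_pos h).ne').congr_deriv ?_
  unfold RR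
  simp only
  rw [mul_div_mul_left _ _ two_ne_zero]

lemma arctan_aux {p q dp dq N : ℝ} (hp : 0 < p) (hN : p ^ 2 + q ^ 2 = N) :
    1 / (1 + (q / p) ^ 2) * ((dq * p - q * dp) / p ^ 2) = (dq * p - q * dp) / N := by
  have : 0 < N := by rw [← hN]; positivity
  have h2 : 1 + (q / p) ^ 2 = N / p ^ 2 := by rw [← hN]; field_simp
  rw [h2]; field_simp

lemma aa_x {φ : ℝ} {a b : ℝ} (h : 0 < pp φ (a, b)) :
    HasDerivAt (fun s => aa φ (s, b)) (-b / RR (a, b) ^ 2) a := by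
  have h1 : HasDerivAt (fun s : ℝ => pp φ (s, b)) (Real.cos φ) a := by
    simpa [pp] using ((hasDerivAt_id a).mul_const (Real.cos φ)).add_const (b * Real.sin φ)
  have h2 : HasDerivAt (fun s : ℝ => qq φ (s, b)) (-Real.sin φ) a := by
    simpa [qq] using ((hasDerivAt_id a).neg.mul_const (Real.sin φ)).add_const (b * Real.cos φ)
  refine (((h2.div h1 h.ne').arctan).const_add φ).congr_deriv ?_
  simp only [Pi.div_apply]
  rw [arctan_aux h (pq_sq φ (a, b)), RR_sq]
  congr 1
  have h1 := Real.sin_sq_add_cos_sq φ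
  unfold pp qq
  linear_combination (-b) * h1

lemma aa_y {φ : ℝ} {a b : ℝ} (h : 0 < pp φ (a, b)) :
    HasDerivAt (fun s => aa φ (a, s)) (a / RR (a, b) ^ 2) b := by
  have h1 : HasDerivAt (fun s : ℝ => pp φ (a, s)) (Real.sin φ) b := by
    simpa [pp] using ((hasDerivAt_id b).mul_const (Real.sin φ)).const_add (a * Real.cos φ)
  have h2 : HasDerivAt (fun s : ℝ => qq φ (a, s)) (Real.cos φ) b := by
    simpa [qq] using ((hasDerivAt_id b).mul_const (Real.cos φ)).const_add (-a * Real.sin φ)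
  refine (((h2.div h1 h.ne').arctan).const_add φ).congr_deriv ?_
  simp only [Pi.div_apply]
  rw [arctan_aux h (pq_sq φ (a, b)), RR_sq]
  congr 1
  have h1 := Real.sin_sq_add_cos_sq φ
  unfold pp qq
  linear_combination a * h1

lemma N_open (φ : ℝ) {U : Set ℝ} (hU : IsOpen U) :
    IsOpen {y : ℝ × ℝ | 0 < pp φ y ∧ aa φ y ∈ U} := by
  have hp : Continuous (pp φ) := by unfold pp; fun_prop
  have hq : Continuous (qq φ) := by unfold qq; fun_prop
  have ho : IsOpen {y : ℝ × ℝ | 0 < pp φ y} := isOpen_lt continuous_const hp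
  have hc : ContinuousOn (aa φ) {y : ℝ × ℝ | 0 < pp φ y} := by
    refine continuousOn_const.add (Real.continuous_arctan.comp_continuousOn ?_)
    exact hq.continuousOn.div hp.continuousOn (fun y hy => ne_of_gt hy)
  exact hc.isOpen_inter_preimage ho hU

lemma lap_polar {n : ℕ} (φ r : ℝ) (hr : 0 < r) {U : Set ℝ} (hU : IsOpen U) (hφ : φ ∈ U)
    (f : ℝ × ℝ → ℝ) (C : Fin n → ℝ) (ψ ψ1 ψ2 τ τ1 τ2 : Fin n → ℝ → ℝ)
    (hf : ∀ y, 0 < pp φ y → aa φ y ∈ U → f y = ∑ i, C i * (ψ i (aa φ y) * τ i (RR y)))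
    (hψ : ∀ i, ∀ t ∈ U, HasDerivAt (ψ i) (ψ1 i t) t)
    (hψ1 : ∀ i, ∀ t ∈ U, HasDerivAt (ψ1 i) (ψ2 i t) t)
    (hτ : ∀ i t, 0 < t → HasDerivAt (τ i) (τ1 i t) t)
    (hτ1 : ∀ i t, 0 < t → HasDerivAt (τ1 i) (τ2 i t) t) :
    lap2 f (r * Real.cos φ, r * Real.sin φ) =
      ∑ i, C i * (ψ2 i φ * τ i r / r ^ 2 + ψ i φ * τ2 i r + ψ i φ * τ1 i r / r) := by
  have hN := N_open φ hU
  set N := {y : ℝ × ℝ | 0 < pp φ y ∧ aa φ y ∈ U} with hNdef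
  have hsc := Real.sin_sq_add_cos_sq φ
  have hp0 : pp φ (r * Real.cos φ, r * Real.sin φ) = r := by
    unfold pp; simp only; linear_combination r * hsc
  have hq0 : qq φ (r * Real.cos φ, r * Real.sin φ) = 0 := by
    unfold qq; simp only; ring
  have ha0 : aa φ (r * Real.cos φ, r * Real.sin φ) = φ := by
    unfold aa; rw [hq0]; simp
  have hR0 : RR (r * Real.cos φ, r * Real.sin φ) = r := by
    unfold RR; simp only
    rw [show (r * Real.cos φ) ^ 2 + (r * Real.sin φ) ^ 2 = r ^ 2 by
      linear_combination r ^ 2 * hsc]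
    exact Real.sqrt_sq hr.le
  have hx0 : (r * Real.cos φ, r * Real.sin φ) ∈ N := ⟨by rw [hp0]; exact hr, by rw [ha0]; exact hφ⟩
  have evx : ∀ a b, (a, b) ∈ N → ∀ᶠ s in nhds a, (s, b) ∈ N := by
    intro a b h
    have hc : Continuous (fun s : ℝ => (s, b)) := by fun_prop
    exact hc.continuousAt.preimage_mem_nhds (hN.mem_nhds h)
  have evy : ∀ a b, (a, b) ∈ N → ∀ᶠ s in nhds b, (a, s) ∈ N := by
    intro a b h
    have hc : Continuous (fun s : ℝ => (a, s)) := by fun_prop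
    exact hc.continuousAt.preimage_mem_nhds (hN.mem_nhds h)
  have fx : ∀ a b, (a, b) ∈ N → pdx f (a, b) =
      ∑ i, C i * (ψ1 i (aa φ (a, b)) * (-b / RR (a, b) ^ 2) * τ i (RR (a, b))
        + ψ i (aa φ (a, b)) * (τ1 i (RR (a, b)) * (a / RR (a, b)))) := by
    intro a b h
    have hd : HasDerivAt (fun s => ∑ i, C i * (ψ i (aa φ (s, b)) * τ i (RR (s, b)))) _ a :=
      HasDerivAt.fun_sum (u := Finset.univ) fun i _ =>
      (dir_first (al := fun s => aa φ (s, b)) (R := fun s => RR (s, b)) (aa_x h.1) (RR_x h.1)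
        (hψ i _ h.2) (hτ i _ (RR_pos h.1))).const_mul (C i)
    unfold pdx
    refine (hd.congr_of_eventuallyEq ?_).deriv
    filter_upwards [evx a b h] with s hs
    exact hf _ hs.1 hs.2
  have fy : ∀ a b, (a, b) ∈ N → pdy f (a, b) =
      ∑ i, C i * (ψ1 i (aa φ (a, b)) * (a / RR (a, b) ^ 2) * τ i (RR (a, b))
        + ψ i (aa φ (a, b)) * (τ1 i (RR (a, b)) * (b / RR (a, b)))) := by
    intro a b h
    have hd : HasDerivAt (fun s => ∑ i, C i * (ψ i (aa φ (a, s)) * τ i (RR (a, s)))) _ b :=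
      HasDerivAt.fun_sum (u := Finset.univ) fun i _ =>
      (dir_first (al := fun s => aa φ (a, s)) (R := fun s => RR (a, s)) (aa_y h.1) (RR_y h.1)
        (hψ i _ h.2) (hτ i _ (RR_pos h.1))).const_mul (C i)
    unfold pdy
    refine (hd.congr_of_eventuallyEq ?_).deriv
    filter_upwards [evy a b h] with s hs
    exact hf _ hs.1 hs.2
  generalize ha : r * Real.cos φ = a at *
  generalize hb : r * Real.sin φ = b at *
  have hxx := HasDerivAt.fun_sum (u := Finset.univ) fun i (_ : i ∈ Finset.univ) =>
      (dir_second (al := fun s => aa φ (s, b)) (R := fun s => RR (s, b)) (aa_x hx0.1) (RR_x hx0.1)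
        (RR_pos hx0.1).ne' (hψ i _ hx0.2) (hτ i _ (RR_pos hx0.1))
        (hψ1 i _ hx0.2) (hτ1 i _ (RR_pos hx0.1))).const_mul (C i)
  have hyy := HasDerivAt.fun_sum (u := Finset.univ) fun i (_ : i ∈ Finset.univ) =>
      (dir_second (al := fun s => aa φ (a, s)) (R := fun s => RR (a, s)) (aa_y hx0.1) (RR_y hx0.1)
        (RR_pos hx0.1).ne' (hψ i _ hx0.2) (hτ i _ (RR_pos hx0.1))
        (hψ1 i _ hx0.2) (hτ1 i _ (RR_pos hx0.1))).const_mul (C i)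
  have e1 : pdx (pdx f) (a, b) = _ := (hxx.congr_of_eventuallyEq (by
    filter_upwards [evx a b hx0] with s hs
    exact fx s b hs)).deriv
  have e2 : pdy (pdy f) (a, b) = _ := (hyy.congr_of_eventuallyEq (by
    filter_upwards [evy a b hx0] with s hs
    exact fy a s hs)).deriv
  unfold lap2
  rw [e1, e2, ← Finset.sum_add_distrib]
  refine Finset.sum_congr rfl fun i _ => ?_
  simp only [ha0, hR0]
  have hab : b ^ 2 = r ^ 2 - a ^ 2 := by
    rw [← ha, ← hb]; linear_combination r ^ 2 * hsc
  field_simp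
  ring_nf
  simp only [show b ^ 2 = r ^ 2 - a ^ 2 from hab]
  ring

lemma cheb_cosh (n : ℤ) {r ρ : ℝ} (hr : 0 < r) (hρ : 0 < ρ) :
    (Polynomial.Chebyshev.T ℝ n).eval ((r / ρ + ρ / r) / 2)
      = Real.cosh (n * Real.log (r / ρ)) := by
  rw [← Polynomial.Chebyshev.T_real_cosh, Real.cosh_log (div_pos hr hρ), inv_div]

lemma tau_deriv (κ : ℝ) {ρ : ℝ} (hρ : 0 < ρ) (t : ℝ) (ht : 0 < t) :
    HasDerivAt (fun t => Real.cosh (κ * Real.log (t / ρ)))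
      (κ * Real.sinh (κ * Real.log (t / ρ)) / t) t ∧
    HasDerivAt (fun t => κ * Real.sinh (κ * Real.log (t / ρ)) / t)
      (κ ^ 2 * Real.cosh (κ * Real.log (t / ρ)) / t ^ 2
        - κ * Real.sinh (κ * Real.log (t / ρ)) / t ^ 2) t := by
  have h0 : HasDerivAt (fun t => κ * Real.log (t / ρ)) (κ / t) t := by
    refine ((((hasDerivAt_id t).div_const ρ).log (div_pos ht hρ).ne').const_mul κ).congr_deriv ?_
    simp only [id]
    field_simp
  constructor
  · refine h0.cosh.congr_deriv ?_
    ring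
  · refine ((h0.sinh.const_mul κ).div (hasDerivAt_id t) ht.ne').congr_deriv ?_
    simp only [id]
    field_simp

/-- **Equation (E14) solves the Goursat problem (E11).** The function
`𝒲(x, ξ) = ∑_i c_i Ψ_i(φ) Ψ_i(ϕ) T_{k_i}((r/ρ + ρ/r)/2)` satisfies `ℒ[𝒲(·, ξ)] = 0`
and `𝒲(x, x) = 1`. -/
theorem goursat_solution (m : ℕ) (hm : 1 ≤ m)
    (k : Fin (m + 1) → ℤ) (hk0 : k 0 = 0) (hk : StrictMono k)
    (θ : Fin (m + 1) → ℝ) (hθ0 : θ 0 = 0)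
    (𝒲 : ℝ × ℝ → ℝ × ℝ → ℝ) (V : ℝ × ℝ → ℝ)
    (h𝒲 : ∀ (r φ ρ ϕ : ℝ), 0 < r → 0 < ρ →
      Wfn m k θ φ ≠ 0 → Wfn m k θ ϕ ≠ 0 →
      𝒲 (r * Real.cos φ, r * Real.sin φ) (ρ * Real.cos ϕ, ρ * Real.sin ϕ)
        = ∑ i, cF m k i * PsiF m k θ i φ * PsiF m k θ i ϕ *
            (Polynomial.Chebyshev.T ℝ (k i)).eval ((r / ρ + ρ / r) / 2))
    (hV : ∀ (r φ : ℝ), 0 < r → Wfn m k θ φ ≠ 0 →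
      V (r * Real.cos φ, r * Real.sin φ) = Vpot m k θ r φ) :
    (∀ (r φ ρ ϕ : ℝ), 0 < r → 0 < ρ → Wfn m k θ φ ≠ 0 → Wfn m k θ ϕ ≠ 0 →
      -lap2 (fun y => 𝒲 y (ρ * Real.cos ϕ, ρ * Real.sin ϕ))
          (r * Real.cos φ, r * Real.sin φ) +
        V (r * Real.cos φ, r * Real.sin φ) *
          𝒲 (r * Real.cos φ, r * Real.sin φ) (ρ * Real.cos ϕ, ρ * Real.sin ϕ) = 0) ∧
    (∀ (r φ : ℝ), 0 < r → Wfn m k θ φ ≠ 0 →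
      𝒲 (r * Real.cos φ, r * Real.sin φ) (r * Real.cos φ, r * Real.sin φ) = 1) := by
  refine ⟨?_, ?_⟩
  · intro r φ ρ ϕ hr hρ hφ hϕ
    have hlap := lap_polar φ r hr (U_open m k θ) hφ
      (fun y => 𝒲 y (ρ * Real.cos ϕ, ρ * Real.sin ϕ))
      (fun i => cF m k i * PsiF m k θ i ϕ)
      (PsiF m k θ) (fun i => deriv (PsiF m k θ i)) (fun i => deriv (deriv (PsiF m k θ i)))
      (fun i t => Real.cosh (k i * Real.log (t / ρ)))
      (fun i t => k i * Real.sinh (k i * Real.log (t / ρ)) / t)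
      (fun i t => (k i : ℝ) ^ 2 * Real.cosh (k i * Real.log (t / ρ)) / t ^ 2
        - k i * Real.sinh (k i * Real.log (t / ρ)) / t ^ 2)
      (by
        intro y hp hy
        have hrep := polar_rep hp
        have := h𝒲 (RR y) (aa φ y) ρ ϕ (RR_pos hp) hρ hy hϕ
        rw [← hrep] at this
        simp only [this]
        refine Finset.sum_congr rfl fun i _ => ?_
        rw [cheb_cosh _ (RR_pos hp) hρ]
        ring)
      (fun i t ht => (contDiffOn_two_derivs (U_open m k θ) (Psi_contDiffOn m k θ i) ht).1)
      (fun i t ht => (contDiffOn_two_derivs (U_open m k θ) (Psi_contDiffOn m k θ i) ht).2)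
      (fun i t ht => (tau_deriv (k i) hρ t ht).1)
      (fun i t ht => (tau_deriv (k i) hρ t ht).2)
    rw [hlap, hV r φ hr hφ, h𝒲 r φ ρ ϕ hr hρ hφ hϕ, ← Finset.sum_neg_distrib, Finset.mul_sum,
      ← Finset.sum_add_distrib]
    refine Finset.sum_eq_zero fun i _ => ?_
    rw [Psi_ode m k θ φ hφ i, cheb_cosh _ hr hρ]
    unfold Vpot
    field_simp
    ring
  · intro r φ hr hφ
    rw [h𝒲 r φ r φ hr hr hφ hφ, ← sum_c_u_sq m k hk0 hk θ hθ0 φ hφ]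
    refine Finset.sum_congr rfl fun i _ => ?_
    rw [cheb_cosh _ hr hr, div_self hr.ne', Real.log_one, mul_zero, Real.cosh_zero, mul_one]
    unfold uF
    rw [mul_pow, ← pow_mul, mul_comm ((i : ℕ) + m) 2, pow_mul]
    norm_num
    ring
end

section
/- Generating identity for the Hadamard coefficients (equations (E10), (E14), (E88)). For x = (r cos φ, r sin φ) and ξ = (ρ cos ϕ, ρ sin ϕ) with r > 0, ρ > 0, W(φ) ≠ 0 and W(ϕ) ≠ 0, set γ := |x − ξ|² = r² + ρ² − 2rρ cos(φ − ϕ). Then ∑_{i=0}^m c_i Ψ_i(φ) Ψ_i(ϕ) T_{k_i}((r/ρ + ρ/r)/2) = ∑_{ν=0}^{k_m} (1/((−4)^ν · ν!)) · U_ν(x, ξ) · γ^ν. -/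
/-- Finite Taylor expansion of a polynomial in terms of iterated derivatives. -/
theorem taylor_aux (p : Polynomial ℝ) (n : ℕ) (hn : p.natDegree < n) (c t : ℝ) :
    p.eval (c + t) = ∑ ν ∈ Finset.range n,
      (1 / (Nat.factorial ν : ℝ)) * (Polynomial.derivative^[ν] p).eval c * t ^ ν := by
  have h1 : p.eval (c + t) = (Polynomial.taylor c p).eval t := by
    rw [Polynomial.taylor_eval, add_comm]
  rw [h1, Polynomial.eval_eq_sum_range' (n := n) (by rwa [Polynomial.natDegree_taylor])]
  refine Finset.sum_congr rfl fun ν _ => ?_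
  rw [Polynomial.taylor_coeff]
  have h2 : (Polynomial.derivative^[ν] p) = Nat.factorial ν • Polynomial.hasseDeriv ν p := by
    rw [← Polynomial.factorial_smul_hasseDeriv]; rfl
  have h3 : (Nat.factorial ν : ℝ) ≠ 0 := by positivity
  rw [h2, Polynomial.eval_smul, nsmul_eq_mul]
  field_simp

/-- **Generating identity for the Hadamard coefficients (equations (E10), (E14), (E88)).**
With `γ = r² + ρ² − 2rρ cos(φ − ϕ)`,
`∑_i c_i Ψ_i(φ) Ψ_i(ϕ) T_{k_i}((r/ρ + ρ/r)/2) = ∑_{ν=0}^{k_m} U_ν γ^ν /((−4)^ν ν!)`. -/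
theorem generating_identity (m : ℕ) (hm : 1 ≤ m)
    (k : Fin (m + 1) → ℤ) (hk0 : k 0 = 0) (hk : StrictMono k)
    (θ : Fin (m + 1) → ℝ) (hθ0 : θ 0 = 0)
    (r φ ρ ϕ : ℝ) (hr : 0 < r) (hρ : 0 < ρ)
    (hWφ : Wfn m k θ φ ≠ 0) (hWϕ : Wfn m k θ ϕ ≠ 0) :
    ∑ i, cF m k i * PsiF m k θ i φ * PsiF m k θ i ϕ *
        (Polynomial.Chebyshev.T ℝ (k i)).eval ((r / ρ + ρ / r) / 2)
      = ∑ ν ∈ Finset.range ((k (Fin.last m)).toNat + 1),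
          (1 / ((-4 : ℝ) ^ ν * (Nat.factorial ν))) * Ucoef m k θ ν r φ ρ ϕ *
            (r ^ 2 + ρ ^ 2 - 2 * r * ρ * Real.cos (φ - ϕ)) ^ ν := by
  have hx : (r / ρ + ρ / r) / 2 = Real.cos (φ - ϕ) +
      (r ^ 2 + ρ ^ 2 - 2 * r * ρ * Real.cos (φ - ϕ)) / (2 * (r * ρ)) := by
    field_simp
    ring
  have hdeg : ∀ i, (Polynomial.Chebyshev.T ℝ (k i)).natDegree <
      (k (Fin.last m)).toNat + 1 := by
    intro i
    have h0 : k 0 ≤ k i := hk.monotone (Fin.zero_le i)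
    have h1 : k i ≤ k (Fin.last m) := hk.monotone (Fin.le_last i)
    rw [Polynomial.Chebyshev.natDegree_T]
    omega
  simp only [hx, Ucoef]
  generalize r ^ 2 + ρ ^ 2 - 2 * r * ρ * Real.cos (φ - ϕ) = g
  simp only [fun i => taylor_aux _ _ (hdeg i), Finset.mul_sum, Finset.sum_mul]
  rw [Finset.sum_comm]
  refine Finset.sum_congr rfl fun ν _ => Finset.sum_congr rfl fun i _ => ?_
  have h4 : (-4 : ℝ) ^ ν = (-2) ^ ν * 2 ^ ν := by rw [← mul_pow]; norm_num
  have h2 : (-2 : ℝ) ^ ν ≠ 0 := pow_ne_zero _ (by norm_num)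
  rw [h4, div_pow, mul_pow 2 (r * ρ)]
  field_simp
end
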